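/- arXiv:2107.11846 — 4 statements merged into one kernel-verified Lean document; each statement's English description precedes it below -/
import Mathlib

section
/- Let κ > 0, let n be a positive integer, and let R₁,…,Rₙ be independent copies of R with P(R₁ + ⋯ + Rₙ = κ) = 0. Then the set { (s₁,…,sₙ) ∈ [0,1]ⁿ : P(s₁R₁ + ⋯ + sₙRₙ = κ) > 0 } has νⁿ-measure zero, where νⁿ denotes the n-fold product of the measure ν. -/
open MeasureTheory Filter Set
open scoped ENNReal NNReal Topology

noncomputable section

/-- `ℓ_t(s,u)`: the length of the interval `[s,s+u] ∩ [0,t]`. -/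
def ellK (t s u : ℝ) : ℝ := max 0 (min (s + u) t - max s 0)

/-- The intensity measure `u^{-γ-1} du` on `(0,∞)`. -/
def muU (γ : ℝ) : Measure ℝ :=
  (volume.restrict (Set.Ioi 0)).withDensity fun u => ENNReal.ofReal (u ^ (-γ - 1))

/-- The measure `μ^ℓ_t` on `(0,∞)`:
`μ^ℓ_t(A) = ∫_ℝ ∫_0^∞ 1{ℓ_t(s,u) ∈ A} u^{-γ-1} du ds`. -/
def muEll (γ t : ℝ) : Measure ℝ :=
  (Measure.map (fun p : ℝ × ℝ => ellK t p.1 p.2)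
    ((volume : Measure ℝ).prod (muU γ))).restrict (Set.Ioi 0)

/-- The measure `μ^{ℓ,r}_t` on `(0,∞)`:
`μ^{ℓ,r}_t(A) = ∫_{(0,∞)} ∫_{(0,∞)} 1{rℓ ∈ A} μ^ℓ_t(dℓ) F_R(dr)`. -/
def muEllR (γ t : ℝ) (FR : Measure ℝ) : Measure ℝ :=
  (Measure.map (fun p : ℝ × ℝ => p.1 * p.2) (FR.prod (muEll γ t))).restrict (Set.Ioi 0)

/-- The measure `ν` on `[0,1]`: density `s^{-(γ+1)} + ((2-γ)/γ)·s^{-γ}` on `(0,1)` with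
respect to Lebesgue measure, together with an atom of mass `1/(γ(γ-1))` at the point `1`. -/
def nuM (γ : ℝ) : Measure ℝ :=
  (volume.restrict (Set.Ioo 0 1)).withDensity
      (fun s => ENNReal.ofReal (s ^ (-(γ + 1)) + (2 - γ) / γ * s ^ (-γ)))
    + (Real.toNNReal (1 / (γ * (γ - 1)))) • Measure.dirac 1

instance nuM.sigmaFinite (γ : ℝ) : SigmaFinite (nuM γ) := by
  unfold nuM; infer_instance

end

/-- `ν` has no atom at a point other than `1`. -/
lemma nuM_singleton (γ a : ℝ) (ha : a ≠ 1) : nuM γ {a} = 0 := by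
  unfold nuM
  rw [Measure.add_apply, Measure.smul_apply]
  have h1 : ((volume.restrict (Set.Ioo (0 : ℝ) 1)).withDensity
      (fun s => ENNReal.ofReal (s ^ (-(γ + 1)) + (2 - γ) / γ * s ^ (-γ)))) {a} = 0 :=
    withDensity_absolutelyContinuous _ _ (measure_singleton a)
  have h2 : (Measure.dirac (1 : ℝ)) {a} = 0 := by
    rw [Measure.dirac_apply' _ (measurableSet_singleton a)]
    simp [Ne.symm ha]
  rw [h1, h2]; simp

lemma pi_nuM_null (γ : ℝ) : ∀ (n : ℕ) (x : Fin n → ℝ) (c : ℝ), (∀ i, 0 < x i) →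
    ∑ i, x i ≠ c → (Measure.pi fun _ : Fin n => nuM γ) {s | ∑ i, s i * x i = c} = 0 := by
  intro n
  induction n with
  | zero =>
    intro x c _ h
    have : {s : Fin 0 → ℝ | ∑ i, s i * x i = c} = ∅ := by
      ext s; simpa using h
    rw [this, measure_empty]
  | succ n ih =>
    intro x c hx h
    have hmp := (measurePreserving_piFinSuccAbove (fun _ : Fin (n + 1) => nuM γ) 0)
    set T : Set (ℝ × (Fin n → ℝ)) := {p | p.1 * x 0 + ∑ i, p.2 i * x i.succ = c} with hT
    have hTm : MeasurableSet T := by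
      apply IsClosed.measurableSet
      exact isClosed_eq (by fun_prop) continuous_const
    have hpre : {s : Fin (n + 1) → ℝ | ∑ i, s i * x i = c}
        = (MeasurableEquiv.piFinSuccAbove (fun _ : Fin (n + 1) => ℝ) 0) ⁻¹' T := by
      ext s
      simp [hT, Fin.sum_univ_succ, MeasurableEquiv.piFinSuccAbove, Fin.removeNth, Fin.tail]
    rw [hpre, hmp.measure_preimage hTm.nullMeasurableSet, Measure.measure_prod_null hTm]
    have hx0 := hx 0
    set a : ℝ := (c - ∑ i : Fin n, x i.succ) / x 0 with ha
    have ha1 : a ≠ 1 := by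
      intro h1
      apply h
      rw [ha, div_eq_one_iff_eq hx0.ne'] at h1
      rw [Fin.sum_univ_succ]; linarith
    have hae : ∀ᵐ t ∂(nuM γ), t ≠ a := by
      rw [ae_iff]; simpa using nuM_singleton γ a ha1
    filter_upwards [hae] with t ht
    have := ih (fun i => x i.succ) (c - t * x 0) (fun i => hx _) (by
      intro h2
      apply ht
      rw [ha, eq_div_iff hx0.ne']; linarith)
    refine Eq.trans ?_ this
    congr 1
    ext s
    simp only [hT, Set.mem_preimage, Set.mem_setOf_eq]
    constructor <;> intro h <;> linarith

/-- If `P(R₁ + ⋯ + Rₙ = κ) = 0` for independent copies `R₁,…,Rₙ` of `R` (expressed via the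
product measure `FRⁿ`), then the set
`{(s₁,…,sₙ) ∈ [0,1]ⁿ : P(s₁R₁ + ⋯ + sₙRₙ = κ) > 0}` is a `νⁿ`-null set. -/
theorem stmt_6 (γ : ℝ) (hγ1 : 1 < γ) (hγ2 : γ < 2)
    (FR : Measure ℝ) [IsProbabilityMeasure FR] (hFRpos : FR (Set.Iic 0) = 0)
    (κ : ℝ) (hκ : 0 < κ) (n : ℕ) (hn : 0 < n)
    (hatom : (Measure.pi fun _ : Fin n => FR) {x | ∑ i, x i = κ} = 0) :
    (Measure.pi fun _ : Fin n => nuM γ)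
      {s | (∀ i, s i ∈ Set.Icc (0 : ℝ) 1)
        ∧ 0 < (Measure.pi fun _ : Fin n => FR) {x | ∑ i, s i * x i = κ}} = 0 := by
  have hm : MeasurableSet
      {p : (Fin n → ℝ) × (Fin n → ℝ) | ¬ ∑ i, p.2 i * p.1 i = κ} := by
    apply MeasurableSet.compl
    exact (isClosed_eq (by fun_prop) continuous_const).measurableSet
  have hpos : ∀ᵐ x ∂(Measure.pi fun _ : Fin n => FR), ∀ i, 0 < x i := by
    rw [ae_all_iff]
    intro i
    have h0 : ∀ᵐ y ∂FR, 0 < y := by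
      rw [ae_iff]; simpa [Set.Iic] using hFRpos
    exact (Measure.quasiMeasurePreserving_eval (fun _ : Fin n => FR) i).ae h0
  have hne : ∀ᵐ x ∂(Measure.pi fun _ : Fin n => FR), ∑ i, x i ≠ κ := by
    rw [ae_iff]; simpa using hatom
  have h1 : ∀ᵐ x ∂(Measure.pi fun _ : Fin n => FR),
      ∀ᵐ s ∂(Measure.pi fun _ : Fin n => nuM γ), ¬ ∑ i, s i * x i = κ := by
    filter_upwards [hpos, hne] with x hx hx2
    rw [ae_iff]; simpa using pi_nuM_null γ n x κ hx hx2
  have h2 := (Measure.ae_ae_comm hm).1 h1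
  rw [ae_iff] at h2
  refine measure_mono_null ?_ h2
  rintro s ⟨-, hs⟩ hc
  rw [ae_iff] at hc
  simp only [not_not] at hc
  exact hs.ne' hc
end

section
/- For every t > 0 and every ℓ₀ with 0 < ℓ₀ ≤ t, one has μ^ℓ_t([ℓ₀, t]) = t·ℓ₀^{−γ}/γ + ((2−γ)/((γ−1)γ))·ℓ₀^{1−γ}; moreover μ^ℓ_t((t,∞)) = 0. -/
open MeasureTheory Filter Set
open scoped ENNReal NNReal Topology

theorem ellK_measurable_aux (t : ℝ) : Measurable (fun p : ℝ × ℝ => ellK t p.1 p.2) := by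
  unfold ellK
  fun_prop

theorem ellK_le_aux (t s u : ℝ) (ht : 0 < t) : ellK t s u ≤ t := by
  unfold ellK
  have h1 := min_le_right (s + u) t
  have h2 := le_max_right s 0
  exact max_le ht.le (by linarith)

theorem ellK_ge_aux (t s u l : ℝ) (hl : 0 < l) (hlt : l ≤ t) :
    l ≤ ellK t s u ↔ l ≤ u ∧ s ∈ Set.Icc (l - u) (t - l) := by
  unfold ellK
  rw [le_max_iff, le_sub_iff_add_le, le_min_iff, ← max_add_add_left, max_le_iff, max_le_iff,
    Set.mem_Icc]
  constructor
  · rintro (h | h)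
    · linarith
    · refine ⟨by linarith, by linarith, by linarith⟩
  · rintro ⟨h1, h2, h3⟩
    right
    refine ⟨⟨by linarith, by linarith⟩, by linarith, by linarith⟩

theorem stmt_7 (γ : ℝ) (hγ1 : 1 < γ) (hγ2 : γ < 2)
    (t : ℝ) (ht : 0 < t) (ℓ0 : ℝ) (hℓ0 : 0 < ℓ0) (hℓ0t : ℓ0 ≤ t) :
    muEll γ t (Set.Icc ℓ0 t)
        = ENNReal.ofReal (t * ℓ0 ^ (-γ) / γ + (2 - γ) / ((γ - 1) * γ) * ℓ0 ^ (1 - γ))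
      ∧ muEll γ t (Set.Ioi t) = 0 := by
  have hm := ellK_measurable_aux t
  have : SFinite (muU γ) := by unfold muU; infer_instance
  constructor
  · unfold muEll
    rw [Measure.restrict_apply measurableSet_Icc,
      Set.inter_eq_left.2 (show Set.Icc ℓ0 t ⊆ Set.Ioi 0 from fun x hx => lt_of_lt_of_le hℓ0 hx.1),
      Measure.map_apply hm measurableSet_Icc,
      Measure.prod_apply_symm (hm measurableSet_Icc)]
    have h1 : ∀ u : ℝ, (volume : Measure ℝ) ((fun s => (s, u)) ⁻¹'
        ((fun p : ℝ × ℝ => ellK t p.1 p.2) ⁻¹' Set.Icc ℓ0 t))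
        = (Set.Ici ℓ0).indicator (fun u => ENNReal.ofReal (t - 2 * ℓ0 + u)) u := by
      intro u
      by_cases hu : ℓ0 ≤ u
      · have : ((fun s => (s, u)) ⁻¹' ((fun p : ℝ × ℝ => ellK t p.1 p.2) ⁻¹' Set.Icc ℓ0 t))
            = Set.Icc (ℓ0 - u) (t - ℓ0) := by
          ext s
          simp only [Set.mem_preimage]
          rw [Set.mem_Icc, ellK_ge_aux t s u ℓ0 hℓ0 hℓ0t]
          exact ⟨fun h => h.1.2, fun h => ⟨⟨hu, h⟩, ellK_le_aux t s u ht⟩⟩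
        rw [this, Real.volume_Icc, Set.indicator_of_mem (Set.mem_Ici.2 hu)]
        congr 1
        ring
      · have : ((fun s => (s, u)) ⁻¹' ((fun p : ℝ × ℝ => ellK t p.1 p.2) ⁻¹' Set.Icc ℓ0 t))
            = ∅ := by
          ext s
          simp only [Set.mem_preimage]
          rw [Set.mem_Icc, ellK_ge_aux t s u ℓ0 hℓ0 hℓ0t]
          simp [hu]
        rw [this, Set.indicator_of_notMem (by simpa using hu)]
        simp
    simp_rw [h1]
    unfold muU
    rw [lintegral_withDensity_eq_lintegral_mul _ (by fun_prop)
      ((Measurable.indicator (by fun_prop) measurableSet_Ici))]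
    have h2 : ∀ u : ℝ, ((fun u : ℝ => ENNReal.ofReal (u ^ (-γ - 1))) *
        (fun u => (Set.Ici ℓ0).indicator (fun u => ENNReal.ofReal (t - 2 * ℓ0 + u)) u)) u
        = (Set.Ici ℓ0).indicator (fun u => ENNReal.ofReal
          ((t - 2 * ℓ0) * u ^ (-γ - 1) + u ^ (-γ))) u := by
      intro u
      by_cases hu : ℓ0 ≤ u
      · have hu0 : 0 < u := by linarith
        rw [Pi.mul_apply, Set.indicator_of_mem (Set.mem_Ici.2 hu),
          Set.indicator_of_mem (Set.mem_Ici.2 hu),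
          ← ENNReal.ofReal_mul (Real.rpow_nonneg hu0.le _)]
        congr 1
        have : u ^ (-γ) = u ^ (-γ - 1) * u := by
          rw [← Real.rpow_add_one hu0.ne']
          congr 1
          ring
        rw [this]
        ring
      · rw [Pi.mul_apply, Set.indicator_of_notMem (by simpa using hu),
          Set.indicator_of_notMem (by simpa using hu), mul_zero]
    simp_rw [h2]
    rw [lintegral_indicator measurableSet_Ici, Measure.restrict_restrict measurableSet_Ici,
      Set.inter_eq_left.2 (show Set.Ici ℓ0 ⊆ Set.Ioi 0 from fun x hx => lt_of_lt_of_le hℓ0 hx),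
      ← restrict_Ioi_eq_restrict_Ici]
    have i1 := integrableOn_Ioi_rpow_of_lt (a := -γ - 1) (by linarith) hℓ0
    have i2 := integrableOn_Ioi_rpow_of_lt (a := -γ) (by linarith) hℓ0
    have i3 : IntegrableOn (fun u : ℝ => (t - 2 * ℓ0) * u ^ (-γ - 1)) (Set.Ioi ℓ0) :=
      i1.const_mul _
    have i4 : IntegrableOn (fun u : ℝ => (t - 2 * ℓ0) * u ^ (-γ - 1) + u ^ (-γ)) (Set.Ioi ℓ0) :=
      i3.add i2
    rw [← ofReal_integral_eq_lintegral_ofReal i4]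
    · congr 1
      rw [integral_add i3 i2, integral_const_mul,
        integral_Ioi_rpow_of_lt (by linarith) hℓ0, integral_Ioi_rpow_of_lt (by linarith) hℓ0]
      have e1 : -γ - 1 + 1 = -γ := by ring
      have e2 : -γ + 1 = 1 - γ := by ring
      have e3 : ℓ0 ^ (1 - γ) = ℓ0 ^ (-γ) * ℓ0 := by
        rw [← Real.rpow_add_one hℓ0.ne', e2]
      rw [e1, e2, e3]
      have g0 : γ ≠ 0 := by linarith
      have g1 : γ - 1 ≠ 0 := by linarith
      have g2 : 1 - γ ≠ 0 := by intro h; apply g1; linarith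
      have e4 : 1 - γ = -(γ - 1) := by ring
      rw [e4, neg_div_neg_eq, neg_div_neg_eq]
      field_simp
      ring
    · filter_upwards [self_mem_ae_restrict measurableSet_Ioi] with u hu
      have hu' : ℓ0 < u := hu
      have hu0 : 0 < u := by linarith
      have : u ^ (-γ) = u ^ (-γ - 1) * u := by
        rw [← Real.rpow_add_one hu0.ne']
        congr 1
        ring
      have h3 : 0 ≤ u ^ (-γ - 1) * (t - 2 * ℓ0 + u) :=
        mul_nonneg (Real.rpow_nonneg hu0.le _) (by linarith)
      simp only [Pi.zero_apply]
      rw [this]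
      linarith
  · unfold muEll
    refine le_antisymm ((Measure.restrict_apply_le _ _).trans ?_) bot_le
    rw [Measure.map_apply hm measurableSet_Ioi]
    have : (fun p : ℝ × ℝ => ellK t p.1 p.2) ⁻¹' Set.Ioi t = ∅ := by
      ext p
      simpa using ellK_le_aux t p.1 p.2 ht
    rw [this]
    simp
end

section
/- For every t > 0 and every ℓ₀ > 0, one has μ^ℓ_t([ℓ₀, ∞)) ≤ t·ℓ₀^{−γ}/(γ(γ−1)). -/
open MeasureTheory Filter Set
open scoped ENNReal NNReal Topology

/-- For every `t > 0` and `ℓ₀ > 0`: `μ^ℓ_t([ℓ₀,∞)) ≤ t·ℓ₀^{-γ}/(γ(γ-1))`. -/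
theorem stmt_8 (γ : ℝ) (hγ1 : 1 < γ) (hγ2 : γ < 2)
    (t : ℝ) (ht : 0 < t) (ℓ0 : ℝ) (hℓ0 : 0 < ℓ0) :
    muEll γ t (Set.Ici ℓ0) ≤ ENNReal.ofReal (t * ℓ0 ^ (-γ) / (γ * (γ - 1))) := by
  have hmeas : Measurable (fun p : ℝ × ℝ => ellK t p.1 p.2) := by
    unfold ellK; fun_prop
  have hsf : SFinite (muU γ) := by unfold muU; infer_instance
  have h1 : muEll γ t (Set.Ici ℓ0) ≤ Measure.map (fun p : ℝ × ℝ => ellK t p.1 p.2)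
      ((volume : Measure ℝ).prod (muU γ)) (Set.Ici ℓ0) :=
    Measure.restrict_apply_le _ _
  refine h1.trans ?_
  rw [Measure.map_apply hmeas measurableSet_Ici,
    Measure.prod_apply_symm (hmeas measurableSet_Ici)]
  have key : ∀ s u : ℝ, ℓ0 ≤ ellK t s u →
      ℓ0 ≤ t ∧ ℓ0 ≤ u ∧ ℓ0 - u ≤ s ∧ s ≤ t - ℓ0 := by
    intro s u h
    unfold ellK at h
    rcases le_max_iff.1 h with h | h
    · linarith
    · have a1 := min_le_left (s + u) t
      have a2 := min_le_right (s + u) t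
      have a3 := le_max_left s 0
      have a4 := le_max_right s 0
      refine ⟨?_, ?_, ?_, ?_⟩ <;> linarith
  by_cases hlt : ℓ0 ≤ t
  swap
  · refine le_of_eq_of_le ?_ zero_le
    rw [lintegral_eq_zero_of_ae_eq_zero]
    refine Filter.Eventually.of_forall fun u => ?_
    have : (fun x : ℝ => (x, u)) ⁻¹' ((fun p : ℝ × ℝ => ellK t p.1 p.2) ⁻¹' Set.Ici ℓ0) = ∅ := by
      ext s
      simp only [Set.mem_preimage, Set.mem_Ici, Set.mem_empty_iff_false, iff_false]
      exact fun h => hlt (key s u h).1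
    simp only [this, measure_empty, Pi.zero_apply]
  have hb : ∀ u : ℝ, volume ((fun x : ℝ => (x, u)) ⁻¹'
      ((fun p : ℝ × ℝ => ellK t p.1 p.2) ⁻¹' Set.Ici ℓ0)) ≤
      (Set.Ici ℓ0).indicator (fun u => ENNReal.ofReal (t - 2 * ℓ0 + u)) u := by
    intro u
    by_cases hu : ℓ0 ≤ u
    · rw [Set.indicator_of_mem (Set.mem_Ici.2 hu)]
      calc _ ≤ volume (Set.Icc (ℓ0 - u) (t - ℓ0)) :=
            measure_mono fun s hs => (key s u hs).2.2
        _ = _ := by rw [Real.volume_Icc]; congr 1; ring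
    · have : (fun x : ℝ => (x, u)) ⁻¹'
          ((fun p : ℝ × ℝ => ellK t p.1 p.2) ⁻¹' Set.Ici ℓ0) = ∅ := by
        ext s
        simp only [Set.mem_preimage, Set.mem_Ici, Set.mem_empty_iff_false, iff_false]
        exact fun h => hu (key s u h).2.1
      rw [this, measure_empty]
      exact zero_le
  refine (lintegral_mono hb).trans ?_
  rw [lintegral_indicator measurableSet_Ici]
  unfold muU
  rw [restrict_withDensity measurableSet_Ici, Measure.restrict_restrict measurableSet_Ici,
    Set.inter_eq_left.2 (Set.Ici_subset_Ioi.2 hℓ0),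
    lintegral_withDensity_eq_lintegral_mul _ (by fun_prop) (by fun_prop),
    ← Measure.restrict_congr_set Ioi_ae_eq_Ici]
  have i1 : IntegrableOn (fun u : ℝ => u ^ (-γ - 1)) (Set.Ioi ℓ0) :=
    integrableOn_Ioi_rpow_of_lt (by linarith) hℓ0
  have i2 : IntegrableOn (fun u : ℝ => u ^ (-γ)) (Set.Ioi ℓ0) :=
    integrableOn_Ioi_rpow_of_lt (by linarith) hℓ0
  have i3 : Integrable (fun u : ℝ => (t - 2 * ℓ0) * u ^ (-γ - 1) + u ^ (-γ))
      (volume.restrict (Set.Ioi ℓ0)) := (i1.const_mul (t - 2 * ℓ0)).add i2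
  have e : ∫⁻ u in Set.Ioi ℓ0, ((fun u => ENNReal.ofReal (u ^ (-γ - 1))) *
        fun u => ENNReal.ofReal (t - 2 * ℓ0 + u)) u =
      ∫⁻ u in Set.Ioi ℓ0, ENNReal.ofReal ((t - 2 * ℓ0) * u ^ (-γ - 1) + u ^ (-γ)) := by
    refine setLIntegral_congr_fun measurableSet_Ioi fun u hu => ?_
    have hu' : ℓ0 < u := hu
    have hu0 : 0 < u := hℓ0.trans hu'
    simp only [Pi.mul_apply]
    rw [← ENNReal.ofReal_mul (by positivity)]
    congr 1
    have : u ^ (-γ) = u ^ (-γ - 1) * u := by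
      rw [← Real.rpow_add_one hu0.ne']; congr 1; ring
    rw [this]; ring
  rw [e, ← ofReal_integral_eq_lintegral_ofReal i3]
  · apply ENNReal.ofReal_le_ofReal
    rw [integral_add (i1.const_mul _) i2, integral_const_mul,
      integral_Ioi_rpow_of_lt (by linarith) hℓ0, integral_Ioi_rpow_of_lt (by linarith) hℓ0]
    have p : ℓ0 ^ (-γ + 1) = ℓ0 ^ (-γ) * ℓ0 := Real.rpow_add_one hℓ0.ne' _
    have q : -γ - 1 + 1 = -γ := by ring
    rw [p, q]
    have hA : 0 < ℓ0 ^ (-γ) := by positivity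
    have hg : 0 < γ := by linarith
    have hg1 : 0 < γ - 1 := by linarith
    have : (t - 2 * ℓ0) * (-ℓ0 ^ (-γ) / -γ) + -(ℓ0 ^ (-γ) * ℓ0) / (-γ + 1) =
        ℓ0 ^ (-γ) * (t * (γ - 1) + ℓ0 * (2 - γ)) / (γ * (γ - 1)) := by
      have : -γ + 1 = -(γ - 1) := by ring
      rw [this, neg_div_neg_eq, neg_div_neg_eq]
      field_simp
      ring
    rw [this, mul_comm t (ℓ0 ^ (-γ))]
    gcongr
    nlinarith
  · filter_upwards [ae_restrict_mem measurableSet_Ioi] with u hu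
    have hu' : ℓ0 < u := hu
    have hu0 : 0 < u := hℓ0.trans hu'
    have : u ^ (-γ) = u ^ (-γ - 1) * u := by
      rw [← Real.rpow_add_one hu0.ne']; congr 1; ring
    simp only [Pi.zero_apply]
    rw [this]
    have : 0 < u ^ (-γ - 1) := by positivity
    nlinarith
end

section
/- Assume the tail function F̄_R(y) := P(R ≥ y) is regularly varying of index −m with m > γ. Let v : (0,∞) → (0,∞) satisfy v(t)/t → ∞ as t → ∞. Then μ^{ℓ,r}_t([v(t), ∞)) = D·t^{−(γ−1)}·F̄_R(v(t)/t)·(1+o(1)) as t → ∞, where D := m(m−1)/(γ(γ−1)(m−γ+1)(m−γ)). -/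
open MeasureTheory Filter Set
open scoped ENNReal NNReal Topology

theorem potter_aux (F : ℝ → ℝ) (hF : Antitone F) (hF0 : ∀ y, 0 ≤ F y) (m : ℝ)
    (hreg : ∀ c : ℝ, 0 < c → Tendsto (fun y => F (c * y) / F y) atTop (𝓝 (c ^ (-m))))
    (q : ℝ) (hq : 0 < q) (hqm : q < m) :
    ∃ Y : ℝ, 0 < Y ∧ (∀ y, 0 < F y) ∧ ∀ y, Y ≤ y → ∀ x, 1 ≤ x →
      F (x * y) / F y ≤ 2 ^ q * x ^ (-q) := by
  have hpos : ∀ y, 0 < F y := by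
    have h1 := hreg 1 one_pos
    simp only [one_mul, Real.one_rpow] at h1
    have h2 : ∀ᶠ y in atTop, 0 < F y / F y := h1.eventually (lt_mem_nhds one_pos)
    intro y
    obtain ⟨z, hz, hyz⟩ := (h2.and (eventually_ge_atTop y)).exists
    have : F z ≠ 0 := by
      intro h; simp [h] at hz
    exact lt_of_lt_of_le (lt_of_le_of_ne (hF0 z) this.symm) (hF hyz)
  have h2 := hreg 2 two_pos
  have hlt : (2 : ℝ) ^ (-m) < 2 ^ (-q) :=
    Real.rpow_lt_rpow_of_exponent_lt one_lt_two (by linarith)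
  obtain ⟨Y, hY⟩ := eventually_atTop.1 ((h2.eventually (gt_mem_nhds hlt)).and (eventually_gt_atTop 0))
  refine ⟨max Y 1, by positivity, hpos, ?_⟩
  have step : ∀ y, max Y 1 ≤ y → F (2 * y) ≤ 2 ^ (-q) * F y := by
    intro y hy
    have := (hY y ((le_max_left _ _).trans hy)).1
    rw [div_lt_iff₀ (hpos y)] at this
    exact this.le
  have iter : ∀ n : ℕ, ∀ y, max Y 1 ≤ y → F (2 ^ n * y) ≤ ((2 : ℝ) ^ n) ^ (-q) * F y := by
    intro n
    induction n with
    | zero => intro y hy; simp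
    | succ n ih =>
      intro y hy
      have hy1 : (1 : ℝ) ≤ y := (le_max_right _ _).trans hy
      have h3 : max Y 1 ≤ 2 ^ n * y := by
        have : (1 : ℝ) ≤ 2 ^ n := one_le_pow₀ (by norm_num)
        nlinarith
      have h4 := step _ h3
      have h5 := ih y hy
      have e : (2 : ℝ) ^ (n + 1) * y = 2 * (2 ^ n * y) := by ring
      rw [e]
      refine h4.trans ?_
      rw [pow_succ, Real.mul_rpow (by positivity) (by positivity)]
      have : (0 : ℝ) < 2 ^ (-q) := by positivity
      nlinarith
  intro y hy x hx
  have hy1 : (1 : ℝ) ≤ y := (le_max_right _ _).trans hy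
  obtain ⟨n, hn1, hn2⟩ := exists_nat_pow_near hx (one_lt_two)
  rw [div_le_iff₀ (hpos y)]
  have h6 : F (x * y) ≤ F (2 ^ n * y) := hF (by nlinarith)
  refine (h6.trans (iter n y hy)).trans ?_
  refine mul_le_mul_of_nonneg_right ?_ (hF0 y)
  have h7 : ((2 : ℝ) ^ (n + 1)) ^ (-q) ≤ x ^ (-q) :=
    Real.rpow_le_rpow_of_nonpos (by linarith) hn2.le (by linarith)
  rw [pow_succ, Real.mul_rpow (by positivity) (by positivity)] at h7
  have h8 : (2 : ℝ) ^ q * 2 ^ (-q) = 1 := by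
    rw [← Real.rpow_add two_pos]; simp
  have h9 : (0 : ℝ) < 2 ^ q := by positivity
  calc ((2 : ℝ) ^ n) ^ (-q) = 2 ^ q * (((2 : ℝ) ^ n) ^ (-q) * 2 ^ (-q)) := by
        rw [mul_left_comm, h8, mul_one]
    _ ≤ _ := mul_le_mul_of_nonneg_left h7 h9.le

theorem lint_rpow (p c : ℝ) (hp : p < 0) (hc : 0 < c) :
    ∫⁻ x in Ioi c, ENNReal.ofReal (x ^ (p - 1)) = ENNReal.ofReal (c ^ p / (-p)) := by
  rw [← ofReal_integral_eq_lintegral_ofReal]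
  · rw [integral_Ioi_rpow_of_lt (by linarith) hc]
    congr 1
    rw [sub_add_cancel, neg_div, div_neg]
  · exact integrableOn_Ioi_rpow_of_lt (by linarith) hc
  · filter_upwards [ae_restrict_mem measurableSet_Ioi] with x hx
    exact Real.rpow_nonneg (hc.le.trans (le_of_lt hx)) _

theorem H_tendsto (F : ℝ → ℝ) (hF : Antitone F) (hF0 : ∀ y, 0 ≤ F y) (m : ℝ)
    (hreg : ∀ c : ℝ, 0 < c → Tendsto (fun y => F (c * y) / F y) atTop (𝓝 (c ^ (-m))))
    (p : ℝ) (hp : 0 < p) (hpm : p < m) :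
    Tendsto (fun y => ∫⁻ x in Ioi (1 : ℝ), ENNReal.ofReal (p * x ^ (p - 1)) *
        ENNReal.ofReal (F (x * y) / F y)) atTop (𝓝 (ENNReal.ofReal (p / (m - p)))) := by
  obtain ⟨q, hpq, hqm⟩ := exists_between hpm
  have hq : 0 < q := hp.trans hpq
  obtain ⟨Y, hY0, hpos, hY⟩ := potter_aux F hF hF0 m hreg q hq hqm
  have e1 : ENNReal.ofReal (p / (m - p)) =
      ∫⁻ x in Ioi (1 : ℝ), ENNReal.ofReal (p * x ^ (p - 1)) * ENNReal.ofReal (x ^ (-m)) := by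
    have : ∀ x ∈ Ioi (1 : ℝ), ENNReal.ofReal (p * x ^ (p - 1)) * ENNReal.ofReal (x ^ (-m))
        = ENNReal.ofReal p * ENNReal.ofReal (x ^ (p - m - 1)) := by
      intro x hx
      have hx0 : (0 : ℝ) < x := one_pos.trans hx
      rw [ENNReal.ofReal_mul hp.le, mul_assoc, ← ENNReal.ofReal_mul (by positivity),
        ← Real.rpow_add hx0]
      congr 3; ring
    rw [setLIntegral_congr_fun measurableSet_Ioi this, lintegral_const_mul _ (by fun_prop),
      lint_rpow _ _ (by linarith) one_pos, ← ENNReal.ofReal_mul hp.le]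
    congr 1
    rw [Real.one_rpow, neg_sub, mul_one_div]
  rw [e1]
  refine tendsto_lintegral_filter_of_dominated_convergence
    (fun x => ENNReal.ofReal (p * x ^ (p - 1)) * ENNReal.ofReal (2 ^ q * x ^ (-q))) ?_ ?_ ?_ ?_
  · filter_upwards [eventually_gt_atTop 0] with y hy
    have : Antitone (fun x => F (x * y)) := fun a b hab => hF (mul_le_mul_of_nonneg_right hab hy.le)
    exact Measurable.mul (by fun_prop) (this.measurable.div_const _).ennreal_ofReal
  · filter_upwards [eventually_ge_atTop Y] with y hy
    filter_upwards [ae_restrict_mem measurableSet_Ioi] with x hx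
    gcongr
    exact hY y hy x (le_of_lt hx)
  · have : ∀ x ∈ Ioi (1 : ℝ), ENNReal.ofReal (p * x ^ (p - 1)) * ENNReal.ofReal (2 ^ q * x ^ (-q))
        = ENNReal.ofReal (p * 2 ^ q) * ENNReal.ofReal (x ^ (p - q - 1)) := by
      intro x hx
      have hx0 : (0 : ℝ) < x := one_pos.trans hx
      rw [← ENNReal.ofReal_mul (by positivity), ← ENNReal.ofReal_mul (by positivity),
        show p - q - 1 = (p - 1) + -q by ring, Real.rpow_add hx0]
      congr 1; ring
    rw [setLIntegral_congr_fun measurableSet_Ioi this, lintegral_const_mul _ (by fun_prop),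
      lint_rpow _ _ (by linarith) one_pos, ← ENNReal.ofReal_mul (by positivity)]
    exact ENNReal.ofReal_ne_top
  · filter_upwards [ae_restrict_mem measurableSet_Ioi] with x hx
    have hx0 : (0 : ℝ) < x := one_pos.trans hx
    exact ENNReal.Tendsto.const_mul (ENNReal.tendsto_ofReal (hreg x hx0))
      (Or.inr ENNReal.ofReal_ne_top)

theorem layer (FR : Measure ℝ) [IsProbabilityMeasure FR] (p y : ℝ) (hp : 0 < p) (hy : 0 < y) :
    ∫⁻ r in Ici y, ENNReal.ofReal ((r / y) ^ p) ∂FR =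
      FR (Ici y) + ∫⁻ x in Ioi (1 : ℝ), ENNReal.ofReal (p * x ^ (p - 1)) * FR (Ici (x * y)) := by
  have h1 : ∀ r ∈ Ici y, ENNReal.ofReal ((r / y) ^ p) =
      1 + ∫⁻ x in Ioi (1 : ℝ), ENNReal.ofReal (p * x ^ (p - 1)) *
        (Ici (x * y)).indicator 1 r := by
    intro r hr
    have hr1 : 1 ≤ r / y := (one_le_div hy).2 hr
    have h2 : ∫⁻ x in Ioi (1 : ℝ), ENNReal.ofReal (p * x ^ (p - 1)) *
        (Ici (x * y)).indicator 1 r = ∫⁻ x in Ioc 1 (r / y), ENNReal.ofReal (p * x ^ (p - 1)) := by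
      rw [← lintegral_indicator measurableSet_Ioi, ← lintegral_indicator measurableSet_Ioc]
      congr 1; ext x
      by_cases hx : 1 < x <;> by_cases hxr : x * y ≤ r <;>
        simp [Set.indicator, hx, hxr, le_div_iff₀ hy]
    have h3 : IntervalIntegrable (fun x : ℝ => p * x ^ (p - 1)) volume 1 (r / y) :=
      (intervalIntegral.intervalIntegrable_rpow' (by linarith)).const_mul p
    rw [h2, ← ofReal_integral_eq_lintegral_ofReal]
    · rw [← intervalIntegral.integral_of_le hr1, intervalIntegral.integral_const_mul,
        integral_rpow (Or.inl (by linarith)), sub_add_cancel, Real.one_rpow,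
        mul_div_cancel₀ _ hp.ne', ← ENNReal.ofReal_one, ← ENNReal.ofReal_add zero_le_one]
      · congr 1; ring
      · have := Real.one_le_rpow hr1 hp.le
        linarith
    · exact (intervalIntegrable_iff_integrableOn_Ioc_of_le hr1).1 h3
    · filter_upwards [ae_restrict_mem measurableSet_Ioc] with x hx
      have : 0 < x := one_pos.trans hx.1
      positivity
  have hmeas : Measurable (fun z : ℝ × ℝ => ENNReal.ofReal (p * z.2 ^ (p - 1)) *
        (Ici (z.2 * y)).indicator (1 : ℝ → ℝ≥0∞) z.1) := by
    have : (fun z : ℝ × ℝ => (Ici (z.2 * y)).indicator (1 : ℝ → ℝ≥0∞) z.1) =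
        {z : ℝ × ℝ | z.2 * y ≤ z.1}.indicator 1 := by
      ext z; simp [Set.indicator]
    have hm : Measurable (fun z : ℝ × ℝ => (Ici (z.2 * y)).indicator (1 : ℝ → ℝ≥0∞) z.1) := by
      rw [this]
      exact measurable_one.indicator (measurableSet_le (by fun_prop) (by fun_prop))
    exact Measurable.mul (by fun_prop) hm
  rw [setLIntegral_congr_fun measurableSet_Ici h1, lintegral_add_left measurable_const,
    setLIntegral_const, one_mul, lintegral_lintegral_swap hmeas.aemeasurable]
  congr 1
  refine setLIntegral_congr_fun measurableSet_Ioi ?_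
  intro x hx
  have hx1 : (1 : ℝ) < x := hx
  simp only
  rw [lintegral_const_mul _ (measurable_one.indicator measurableSet_Ici),
    lintegral_indicator_one measurableSet_Ici, Measure.restrict_apply measurableSet_Ici]
  congr 2
  refine inter_eq_left.2 (Ici_subset_Ici.2 ?_)
  nlinarith

theorem karamata (FR : Measure ℝ) [IsProbabilityMeasure FR] (m : ℝ)
    (hreg : ∀ c : ℝ, 0 < c →
      Tendsto (fun y => (FR (Set.Ici (c * y))).toReal / (FR (Set.Ici y)).toReal)
        atTop (𝓝 (c ^ (-m)))) (p : ℝ) (hp : 0 < p) (hpm : p < m) :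
    Tendsto (fun y => (∫⁻ r in Ici y, ENNReal.ofReal ((r / y) ^ p) ∂FR) / FR (Ici y)) atTop
      (𝓝 (ENNReal.ofReal (m / (m - p)))) := by
  have hF : Antitone (fun y => (FR (Ici y)).toReal) := fun a b hab =>
    ENNReal.toReal_mono (measure_ne_top _ _) (measure_mono (Ici_subset_Ici.2 hab))
  have hF0 : ∀ y, 0 ≤ (FR (Ici y)).toReal := fun y => ENNReal.toReal_nonneg
  obtain ⟨Y, hY0, hpos, hY⟩ := potter_aux _ hF hF0 m hreg p hp hpm
  have h := H_tendsto _ hF hF0 m hreg p hp hpm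
  have h1 := (tendsto_const_nhds (x := (1 : ℝ≥0∞))).add h
  have e : ENNReal.ofReal (m / (m - p)) = 1 + ENNReal.ofReal (p / (m - p)) := by
    have : 0 < m - p := by linarith
    rw [← ENNReal.ofReal_one, ← ENNReal.ofReal_add zero_le_one (by positivity)]
    congr 1; field_simp; ring
  rw [e]
  refine h1.congr' ?_
  filter_upwards [eventually_gt_atTop 0] with y hy
  have hne : FR (Ici y) ≠ 0 := fun h0 => by have := hpos y; simp [h0] at this
  rw [layer FR p y hp hy, ENNReal.add_div, ENNReal.div_self hne (measure_ne_top _ _)]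
  congr 1
  have : Antitone (fun x => FR (Ici (x * y))) := fun a b hab =>
    measure_mono (Ici_subset_Ici.2 (mul_le_mul_of_nonneg_right hab hy.le))
  have hm := this.measurable
  have hm2 : Measurable (fun x => ENNReal.ofReal (p * x ^ (p - 1)) * FR (Ici (x * y))) :=
    Measurable.mul (by fun_prop) hm
  rw [ENNReal.div_eq_inv_mul, ← lintegral_const_mul _ hm2]
  congr 1; ext x
  rw [ENNReal.ofReal_div_of_pos (hpos y), ENNReal.ofReal_toReal (measure_ne_top _ _),
    ENNReal.ofReal_toReal (measure_ne_top _ _), ENNReal.div_eq_inv_mul]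
  ring

theorem muEll_Ici (γ t a : ℝ) (hγ1 : 1 < γ) (ha : 0 < a) :
    muEll γ t (Ici a) = if a ≤ t then
      ENNReal.ofReal ((t - 2 * a) * a ^ (-γ) / γ + a ^ (1 - γ) / (γ - 1)) else 0 := by
  have hme : Measurable (fun p : ℝ × ℝ => ellK t p.1 p.2) := by unfold ellK; fun_prop
  have : SFinite (muU γ) := by unfold muU; infer_instance
  rw [muEll, Measure.restrict_apply measurableSet_Ici,
    inter_eq_left.2 (Ici_subset_Ioi.2 ha), Measure.map_apply hme measurableSet_Ici,
    Measure.prod_apply_symm (hme measurableSet_Ici), muU,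
    lintegral_withDensity_eq_lintegral_mul₀ (by fun_prop)
      (measurable_measure_prodMk_right (hme measurableSet_Ici)).aemeasurable]
  have hs : ∀ u : ℝ, (fun x : ℝ => (x, u)) ⁻¹' ((fun p : ℝ × ℝ => ellK t p.1 p.2) ⁻¹' Ici a) =
      if a ≤ t ∧ a ≤ u then Icc (a - u) (t - a) else ∅ := by
    intro u
    ext s
    have : a ≤ ellK t s u ↔ a ≤ s + u ∧ a ≤ u ∧ a ≤ t ∧ s ≤ t - a := by
      unfold ellK
      rw [le_max_iff, le_sub_iff_add_le, le_min_iff]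
      constructor
      · rintro (h | ⟨h1, h2⟩)
        · linarith
        · have := le_max_left s 0
          have := le_max_right s 0
          refine ⟨?_, ?_, ?_, ?_⟩ <;> linarith
      · rintro ⟨h1, h2, h3, h4⟩
        right
        rcases max_cases s 0 with h | h <;> constructor <;> linarith
    simp only [mem_preimage, mem_Ici, this]
    split_ifs with h
    · simp only [mem_Icc, h]
      constructor
      · rintro ⟨h1, _, _, h4⟩; exact ⟨by linarith, h4⟩
      · rintro ⟨h1, h4⟩; exact ⟨by linarith, trivial, trivial, h4⟩
    · simp only [mem_empty_iff_false, iff_false]; tauto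
  simp only [Pi.mul_apply, hs]
  split_ifs with hat
  · have : ∀ u ∈ Ioi (0 : ℝ), ENNReal.ofReal (u ^ (-γ - 1)) *
        volume (if a ≤ t ∧ a ≤ u then Icc (a - u) (t - a) else ∅) =
        (Ici a).indicator (fun u => ENNReal.ofReal ((t - 2 * a) * u ^ (-γ - 1) + u ^ (-γ))) u := by
      intro u hu
      have hu0 : (0 : ℝ) < u := hu
      by_cases h : a ≤ u
      · simp only [hat, h, and_self, if_true, Real.volume_Icc, mem_Ici, indicator_of_mem]
        rw [← ENNReal.ofReal_mul (by positivity)]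
        congr 1
        have : u ^ (-γ) = u ^ (-γ - 1) * u := by
          rw [Real.rpow_sub_one hu0.ne', div_mul_cancel₀ _ hu0.ne']
        rw [this]; ring
      · simp [h]
    rw [setLIntegral_congr_fun measurableSet_Ioi this, setLIntegral_indicator measurableSet_Ici,
      inter_eq_left.2 (Ici_subset_Ioi.2 ha), setLIntegral_congr Ioi_ae_eq_Ici.symm]
    have i1 : IntegrableOn (fun u : ℝ => (t - 2 * a) * u ^ (-γ - 1)) (Ioi a) :=
      (integrableOn_Ioi_rpow_of_lt (by linarith) ha).const_mul _
    have i2 : IntegrableOn (fun u : ℝ => u ^ (-γ)) (Ioi a) :=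
      integrableOn_Ioi_rpow_of_lt (by linarith) ha
    have i3 : IntegrableOn (fun u : ℝ => (t - 2 * a) * u ^ (-γ - 1) + u ^ (-γ)) (Ioi a) :=
      i1.add i2
    rw [← ofReal_integral_eq_lintegral_ofReal i3]
    · congr 1
      rw [integral_add i1 i2, integral_const_mul, integral_Ioi_rpow_of_lt (by linarith) ha,
        integral_Ioi_rpow_of_lt (by linarith) ha]
      have h1 : γ ≠ 0 := by linarith
      have h2 : γ - 1 ≠ 0 := by linarith
      have h3 : -γ + 1 ≠ 0 := by intro h; apply h2; linarith
      rw [show -γ - 1 + 1 = -γ by ring, show -γ + 1 = -(γ - 1) by ring,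
        show (1 - γ) = -(γ - 1) by ring]
      field_simp
    · filter_upwards [ae_restrict_mem measurableSet_Ioi] with u hu
      have hau : a < u := hu
      have hu0 : (0 : ℝ) < u := ha.trans hu
      have : u ^ (-γ) = u ^ (-γ - 1) * u := by
        rw [Real.rpow_sub_one hu0.ne', div_mul_cancel₀ _ hu0.ne']
      have h2 : 0 ≤ u ^ (-γ - 1) := by positivity
      simp only [Pi.zero_apply]
      rw [this]; nlinarith [mul_nonneg h2 (by linarith : 0 ≤ t - 2 * a + u)]
  · simp [hat]

theorem muEllR_Ici (γ t w : ℝ) (hγ1 : 1 < γ) (hγ2 : γ < 2) (ht : 0 < t) (hw : 0 < w)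
    (FR : Measure ℝ) [IsProbabilityMeasure FR] (hFRpos : FR (Set.Iic 0) = 0) :
    muEllR γ t FR (Ici w) = ENNReal.ofReal (t ^ (-(γ - 1))) *
      (ENNReal.ofReal (1 / γ) * (∫⁻ r in Ici (w / t), ENNReal.ofReal ((r / (w / t)) ^ γ) ∂FR) +
       ENNReal.ofReal ((2 - γ) / (γ * (γ - 1))) *
        (∫⁻ r in Ici (w / t), ENNReal.ofReal ((r / (w / t)) ^ (γ - 1)) ∂FR)) := by
  have hmm : Measurable (fun p : ℝ × ℝ => p.1 * p.2) := by fun_prop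
  have : SFinite (muEll γ t) := by unfold muEll muU; infer_instance
  have hy : 0 < w / t := by positivity
  rw [muEllR, Measure.restrict_apply measurableSet_Ici,
    inter_eq_left.2 (Ici_subset_Ioi.2 hw), Measure.map_apply hmm measurableSet_Ici,
    Measure.prod_apply (hmm measurableSet_Ici)]
  rw [← lintegral_const_mul _ (by fun_prop), ← lintegral_const_mul _ (by fun_prop),
    ← lintegral_add_left (by fun_prop), ← lintegral_const_mul _ (by fun_prop),
    ← lintegral_indicator measurableSet_Ici]
  have hae : ∀ᵐ r ∂FR, 0 < r := by
    rw [ae_iff]; simp only [not_lt]; exact hFRpos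
  refine lintegral_congr_ae ?_
  filter_upwards [hae] with r hr
  have hset : Prod.mk r ⁻¹' ((fun p : ℝ × ℝ => p.1 * p.2) ⁻¹' Ici w) = Ici (w / r) := by
    ext l; simp [div_le_iff₀ hr, mul_comm]
  rw [hset, muEll_Ici γ t _ hγ1 (by positivity)]
  have hiff : w / r ≤ t ↔ w / t ≤ r := by
    rw [div_le_iff₀ hr, div_le_iff₀ ht, mul_comm]
  by_cases h : w / t ≤ r
  · rw [if_pos (hiff.2 h), indicator_of_mem (show r ∈ Ici (w / t) from h)]
    have hg1 : 0 < γ - 1 := by linarith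
    have hg2 : 0 < 2 - γ := by linarith
    rw [← ENNReal.ofReal_mul (by positivity), ← ENNReal.ofReal_mul (by positivity),
      ← ENNReal.ofReal_add (by positivity) (by positivity), ← ENNReal.ofReal_mul (by positivity)]
    congr 1
    set x := r / (w / t) with hx
    have hx0 : 0 < x := by positivity
    have hwr : w / r = t * x⁻¹ := by rw [hx]; field_simp
    have k1 : (t * x⁻¹) ^ (-γ) = t ^ (-(γ - 1)) / t * x ^ γ := by
      rw [Real.mul_rpow ht.le (by positivity), Real.inv_rpow hx0.le, Real.rpow_neg hx0.le, inv_inv,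
        ← Real.rpow_sub_one ht.ne']
      congr 2; ring
    have k2 : (t * x⁻¹) ^ (1 - γ) = t ^ (-(γ - 1)) * x ^ (γ - 1) := by
      rw [show 1 - γ = -(γ - 1) by ring, Real.mul_rpow ht.le (by positivity),
        Real.inv_rpow hx0.le, Real.rpow_neg hx0.le (γ - 1), inv_inv]
    have k3 : x ^ γ = x ^ (γ - 1) * x := by
      rw [Real.rpow_sub_one hx0.ne', div_mul_cancel₀ _ hx0.ne']
    rw [hwr, k1, k2, k3]
    field_simp
    ring
  · rw [if_neg (fun h' => h (hiff.1 h')), indicator_of_notMem (show r ∉ Ici (w / t) from h)]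

/-- If `F̄_R` is regularly varying of index `-m`, `m > γ`, and `v(t)/t → ∞`, then
`μ^{ℓ,r}_t([v(t),∞)) = D·t^{-(γ-1)}·F̄_R(v(t)/t)·(1+o(1))` as `t → ∞`, with
`D = m(m-1)/(γ(γ-1)(m-γ+1)(m-γ))`. -/
theorem stmt_18 (γ : ℝ) (hγ1 : 1 < γ) (hγ2 : γ < 2)
    (FR : Measure ℝ) [IsProbabilityMeasure FR] (hFRpos : FR (Set.Iic 0) = 0)
    (hmom : Integrable (fun r => r ^ γ) FR)
    (m : ℝ) (hm : γ < m)
    (hreg : ∀ c : ℝ, 0 < c →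
      Tendsto (fun y => (FR (Set.Ici (c * y))).toReal / (FR (Set.Ici y)).toReal)
        atTop (𝓝 (c ^ (-m))))
    (v : ℝ → ℝ) (hvpos : ∀ t, 0 < v t)
    (hvt : Tendsto (fun t => v t / t) atTop atTop) :
    Tendsto
      (fun t => (muEllR γ t FR (Set.Ici (v t))).toReal
        / (t ^ (-(γ - 1)) * (FR (Set.Ici (v t / t))).toReal))
      atTop (𝓝 (m * (m - 1) / (γ * (γ - 1) * (m - γ + 1) * (m - γ)))) := by
  have hg1 : 0 < γ - 1 := by linarith
  have hg2 : 0 < 2 - γ := by linarith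
  have hmg : 0 < m - γ := by linarith
  have hmg1 : 0 < m - γ + 1 := by linarith
  have hm0 : 0 < m := by linarith
  have K1 := (karamata FR m hreg γ (by linarith) hm).comp hvt
  have K2 := (karamata FR m hreg (γ - 1) hg1 (by linarith)).comp hvt
  have K := (ENNReal.Tendsto.const_mul (a := ENNReal.ofReal (1 / γ)) K1
    (Or.inr ENNReal.ofReal_ne_top)).add
    (ENNReal.Tendsto.const_mul (a := ENNReal.ofReal ((2 - γ) / (γ * (γ - 1)))) K2
    (Or.inr ENNReal.ofReal_ne_top))
  have e : ENNReal.ofReal (1 / γ) * ENNReal.ofReal (m / (m - γ)) +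
      ENNReal.ofReal ((2 - γ) / (γ * (γ - 1))) * ENNReal.ofReal (m / (m - (γ - 1))) =
      ENNReal.ofReal (m * (m - 1) / (γ * (γ - 1) * (m - γ + 1) * (m - γ))) := by
    rw [show m - (γ - 1) = m - γ + 1 by ring, ← ENNReal.ofReal_mul (by positivity),
      ← ENNReal.ofReal_mul (by positivity), ← ENNReal.ofReal_add (by positivity) (by positivity)]
    congr 1
    field_simp
    ring
  rw [e] at K
  have K' := (ENNReal.tendsto_toReal ENNReal.ofReal_ne_top).comp K
  have hm1 : 0 < m - 1 := by linarith
  rw [ENNReal.toReal_ofReal (by positivity)] at K'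
  refine K'.congr' ?_
  filter_upwards [eventually_gt_atTop 0] with t ht
  have htp : 0 < t ^ (-(γ - 1)) := by positivity
  rw [muEllR_Ici γ t (v t) hγ1 hγ2 ht (hvpos t) FR hFRpos, ENNReal.toReal_mul,
    ENNReal.toReal_ofReal htp.le, mul_div_mul_left _ _ htp.ne', ← ENNReal.toReal_div]
  simp only [Function.comp]
  rw [ENNReal.add_div, mul_div_assoc, mul_div_assoc]
end
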